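/- Let M_0 ∈ ℝ^{p×H} (p ≤ H) have rank m (hypothesis H_0), and assume n^{1/2} vec(M̂ − M_0) converges in distribution to N(0, Γ). Let λ̂_1 ≥ … ≥ λ̂_p be the singular values of M̂ and Λ̂_1 = n Σ_{k=m+1}^p λ̂_k². Let Q_1 and Q_2 be the orthogonal projectors onto the left and right singular subspaces of M_0 associated with its p − m smallest (i.e. zero) singular values. Then Λ̂_1 converges in distribution to Σ_k ν_k W_k², where the W_k's are i.i.d. standard Gaussian variables and the ν_k's are the eigenvalues of (Q_2 ⊗ Q_1) Γ (Q_2 ⊗ Q_1). -/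

import Mathlib

open MeasureTheory ProbabilityTheory Filter Matrix Polynomial Topology
open scoped Kronecker

noncomputable section

/-- Convergence in distribution (weak convergence of the laws) of a sequence of random
elements `X n` towards the limit law `L`. -/
def TendstoInDistribution {Ω E : Type*} [MeasurableSpace Ω] [MeasurableSpace E] [TopologicalSpace E]
    (μ : Measure Ω) (X : ℕ → Ω → E) (L : Measure E) : Prop :=
  ∀ f : BoundedContinuousFunction E ℝ,
    Tendsto (fun n => ∫ ω, f (X n ω) ∂μ) atTop (𝓝 (∫ x, f x ∂L))

/-- Convergence in probability of `X n` towards the constant `c`. -/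
def TendstoInProbability {Ω E : Type*} [MeasurableSpace Ω] [PseudoMetricSpace E]
    (μ : Measure Ω) (X : ℕ → Ω → E) (c : E) : Prop :=
  ∀ ε : ℝ, 0 < ε → Tendsto (fun n => μ {ω | ε ≤ dist (X n ω) c}) atTop (𝓝 0)

/-- The law of a vector of i.i.d. standard Gaussian random variables. -/
def stdGaussianPi (ι : Type*) [Fintype ι] : Measure (ι → ℝ) :=
  Measure.pi fun _ => gaussianReal 0 1

/-- Positive semidefinite square root (junk value `0` if the matrix is not psd). -/
def matSqrt {ι : Type*} [Fintype ι] [DecidableEq ι] (Γ : Matrix ι ι ℝ) : Matrix ι ι ℝ :=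
  by classical exact if h : Γ.PosSemidef then
    (h.1.eigenvectorUnitary : Matrix ι ι ℝ) * diagonal (Real.sqrt ∘ h.1.eigenvalues) *
      (star h.1.eigenvectorUnitary : Matrix ι ι ℝ) else 0

/-- The centered Gaussian distribution `N(0, Γ)` on `ι → ℝ`. -/
def gaussianPi {ι : Type*} [Fintype ι] [DecidableEq ι] (Γ : Matrix ι ι ℝ) :
    Measure (ι → ℝ) :=
  (stdGaussianPi ι).map (fun z => matSqrt Γ *ᵥ z)

/-- The chi-squared distribution with `k` degrees of freedom: the law of the squared
Euclidean norm of a standard Gaussian vector of `ℝ^k`. -/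
def chiSquared (k : ℕ) : Measure ℝ :=
  (stdGaussianPi (Fin k)).map (fun z => ∑ i, z i ^ 2)

/-- `vec` operator stacking the columns of a `p × H` matrix. -/
def vecM {p H : ℕ} (M : Matrix (Fin p) (Fin H) ℝ) : Fin H × Fin p → ℝ :=
  fun x => M x.2 x.1

/-- The `(1-α)`-quantile of the law of the real random variable `T` under `ν`:
`inf {x | F(x) ≥ 1 - α}`. -/
def lawQuantile {Ω' : Type*} [MeasurableSpace Ω'] (ν : Measure Ω') (T : Ω' → ℝ) (α : ℝ) : ℝ :=
  sInf {x : ℝ | 1 - α ≤ (ν {ω' | T ω' ≤ x}).toReal}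

/-- A point `θ` is `ℳ`-nonsingular if `θ ∈ ℳ` and, near `θ`, the set `ℳ` is the zero set of a
continuously differentiable function `g` with values in some `ℝ^q` whose Jacobian at `θ` has
full rank `q`. -/
def MNonsingular {p : ℕ} (M : Set (Fin p → ℝ)) (θ : Fin p → ℝ) : Prop :=
  θ ∈ M ∧ ∃ (q : ℕ) (V : Set (Fin p → ℝ)) (g : (Fin p → ℝ) → Fin q → ℝ),
    IsOpen V ∧ θ ∈ V ∧ ContDiffOn ℝ 1 g V ∧
    (LinearMap.toMatrix' ((fderiv ℝ g θ) : (Fin p → ℝ) →ₗ[ℝ] (Fin q → ℝ))).rank = q ∧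
    M ∩ V = {x | g x = 0} ∩ V

/-- Moore–Penrose pseudo-inverse relation for real square matrices. -/
def IsMoorePenroseInv {ι : Type*} [Fintype ι] (A X : Matrix ι ι ℝ) : Prop :=
  A * X * A = A ∧ X * A * X = X ∧ (A * X)ᵀ = A * X ∧ (X * A)ᵀ = X * A

/-!
By Ky Fan's principle, `∑_{k > m} σ_k(A)²` is the minimum of `‖P A‖²` over the orthogonal
projectors `P` of rank `p - m`; write `T(A)` for its square root. For large `s`, a projector that
is nearly optimal for `s M₀ + Z` must nearly annihilate `M₀`, hence lies within `O(1/s)` of `Q₁`;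
moreover some projector `P` also satisfies `P (s M₀ + Z) = P Z Q₂`. Together these give
`T(s M₀ + Z) = ‖Q₁ Z Q₂‖ + O(‖Z‖² / s)`, so `(Z, t) ↦ T(t⁻¹ M₀ + Z)` extends continuously to
`t = 0`. Slutsky's theorem for the pair `(√n (M̂ - M₀), 1/√n)` then gives the limit
`‖Q₁ Z Q₂‖² = ‖(Q₂ ⊗ Q₁) vec Z‖²` with `vec Z ∼ N(0, Γ)`. Diagonalizing this quadratic form
and using the rotation invariance of the standard Gaussian law gives the weighted chi-squared law.
-/

section UnitaryConjugation

variable {n : Type*} [Fintype n] [DecidableEq n]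

open Unitary

lemma trace_conjStarAlgAut {𝕜 : Type*} [RCLike 𝕜] (u : unitaryGroup n 𝕜) (A : Matrix n n 𝕜) :
    (conjStarAlgAut 𝕜 _ u A).trace = A.trace := by
  rw [conjStarAlgAut_apply, trace_mul_cycle, coe_star_mul_self, Matrix.one_mul]

lemma exists_eq_conjStarAlgAut_of_charpoly_eq {𝕜 : Type*} [RCLike 𝕜] {A B : Matrix n n 𝕜}
    (hA : A.IsHermitian) (hB : B.IsHermitian) (h : A.charpoly = B.charpoly) :
    ∃ u : unitaryGroup n 𝕜, A = conjStarAlgAut 𝕜 _ u B := by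
  refine ⟨hA.eigenvectorUnitary * star hB.eigenvectorUnitary, ?_⟩
  rw [conjStarAlgAut_mul_apply, hB.conjStarAlgAut_star_eigenvectorUnitary,
    ← (hA.eigenvalues_eq_eigenvalues_iff hB).2 h]
  exact hA.spectral_theorem

lemma exists_eq_conjStarAlgAut_diagonal {A : Matrix n n ℝ} (hA : A.IsHermitian) {d : n → ℝ}
    (hd : A.charpoly = ∏ i, (X - C (d i))) :
    ∃ u : unitaryGroup n ℝ, A = conjStarAlgAut ℝ _ u (diagonal d) :=
  exists_eq_conjStarAlgAut_of_charpoly_eq hA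
    (isHermitian_diagonal d) (hd.trans (charpoly_diagonal d).symm)

end UnitaryConjugation

section Frobenius

open scoped Matrix.Norms.Frobenius

variable {m n κ : Type*} [Fintype m] [Fintype n] [Fintype κ]

lemma frobenius_norm_sq_eq_trace (A : Matrix m n ℝ) : ‖A‖ ^ 2 = (A * Aᵀ).trace := by
  rw [frobenius_norm_def, ← Real.sqrt_eq_rpow, Real.sq_sqrt (by positivity)]
  simp [Matrix.trace, Matrix.mul_apply, sq]

lemma frobenius_norm_sq_eq_vec_dotProduct_vec (A : Matrix m n ℝ) : ‖A‖ ^ 2 = vec A ⬝ᵥ vec A := by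
  rw [vec_dotProduct_vec, trace_mul_comm, frobenius_norm_sq_eq_trace]

section StarProjection

variable {P Q : Matrix n n ℝ}

lemma transpose_eq_of_isStarProjection (hP : IsStarProjection P) : Pᵀ = P :=
  (conjTranspose_eq_transpose_of_trivial P).symm.trans hP.isSelfAdjoint

lemma frobenius_norm_sq_mul_of_isStarProjection (hP : IsStarProjection P) (A : Matrix n κ ℝ) :
    ‖P * A‖ ^ 2 = (P * (A * Aᵀ)).trace := by
  rw [frobenius_norm_sq_eq_trace, transpose_mul, transpose_eq_of_isStarProjection hP,
    ← Matrix.mul_assoc, trace_mul_comm, ← Matrix.mul_assoc, ← Matrix.mul_assoc,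
    hP.isIdempotentElem.eq, Matrix.mul_assoc]

lemma frobenius_norm_mul_le_of_isStarProjection (hP : IsStarProjection P) (A : Matrix n κ ℝ) :
    ‖P * A‖ ≤ ‖A‖ := by
  classical
  have pythagoras : ‖A‖ ^ 2 = ‖P * A‖ ^ 2 + ‖(1 - P) * A‖ ^ 2 := by
    rw [frobenius_norm_sq_mul_of_isStarProjection hP,
      frobenius_norm_sq_mul_of_isStarProjection hP.one_sub, ← trace_add, ← Matrix.add_mul,
      add_sub_cancel, Matrix.one_mul, frobenius_norm_sq_eq_trace]
  exact le_of_sq_le_sq (by linarith [sq_nonneg ‖(1 - P) * A‖]) (norm_nonneg _)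

lemma frobenius_norm_mul_isStarProjection_le (hP : IsStarProjection P) (A : Matrix m n ℝ) :
    ‖A * P‖ ≤ ‖A‖ := by
  rw [← frobenius_norm_transpose, transpose_mul, transpose_eq_of_isStarProjection hP,
    ← frobenius_norm_transpose A]
  exact frobenius_norm_mul_le_of_isStarProjection hP Aᵀ

lemma diag_mem_Icc_of_isStarProjection (hP : IsStarProjection P) (i : n) :
    P i i ∈ Set.Icc (0 : ℝ) 1 := by
  have diag_eq : P i i = ∑ j, P i j ^ 2 := by
    conv_lhs => rw [← hP.isIdempotentElem.eq, mul_apply]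
    refine Finset.sum_congr rfl fun j _ => ?_
    rw [sq, ← congrFun₂ (transpose_eq_of_isStarProjection hP) i j, transpose_apply]
  have sq_diag_le : P i i ^ 2 ≤ P i i :=
    (Finset.single_le_sum (fun j _ => sq_nonneg (P i j)) (Finset.mem_univ i)).trans diag_eq.ge
  exact ⟨(sq_nonneg _).trans sq_diag_le, by nlinarith⟩

end StarProjection

end Frobenius

section Projectors

open scoped Matrix.Norms.Frobenius

variable {n κ : Type*} [Fintype n] [Fintype κ]

lemma trace_eq_rank_of_isIdempotentElem {K : Type*} [Field K] {Q : Matrix n n K}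
    (hQ : IsIdempotentElem Q) : Q.trace = Q.rank := by
  classical
  have h := (LinearMap.IsIdempotentElem.isProj_range _
    (hQ.map (toLinAlgEquiv' (R := K) (n := n)))).trace
  exact (trace_toLin'_eq Q).symm.trans h

/-- The orthogonal projectors of rank `k` on `ℝⁿ`, i.e. the Grassmannian of `k`-planes. -/
def projectorsOfRank (n : Type*) [Fintype n] (k : ℕ) : Set (Matrix n n ℝ) :=
  {P | IsStarProjection P ∧ P.rank = k}

lemma mem_projectorsOfRank_iff_trace {P : Matrix n n ℝ} {k : ℕ} :
    P ∈ projectorsOfRank n k ↔ IsStarProjection P ∧ P.trace = k :=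
  and_congr_right fun hP => by
    rw [trace_eq_rank_of_isIdempotentElem hP.isIdempotentElem, Nat.cast_inj]

lemma frobenius_norm_sq_of_mem_projectorsOfRank {P : Matrix n n ℝ} {k : ℕ}
    (hP : P ∈ projectorsOfRank n k) : ‖P‖ ^ 2 = k := by
  rw [frobenius_norm_sq_eq_trace, transpose_eq_of_isStarProjection hP.1,
    hP.1.isIdempotentElem.eq, (mem_projectorsOfRank_iff_trace.1 hP).2]

lemma isCompact_projectorsOfRank (k : ℕ) : IsCompact (projectorsOfRank n k) := by
  have : ProperSpace (Matrix n n ℝ) := FiniteDimensional.proper ℝ _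
  refine Metric.isCompact_of_isClosed_isBounded ?_ ?_
  · have isClosed_isStarProjection : IsClosed {P : Matrix n n ℝ | IsStarProjection P} := by
      simp only [isStarProjection_iff, IsIdempotentElem, IsSelfAdjoint]
      exact (isClosed_eq (by fun_prop) (by fun_prop)).inter
        (isClosed_eq (by fun_prop) (by fun_prop))
    have isClosed_trace_eq : IsClosed {P : Matrix n n ℝ | P.trace = k} :=
      isClosed_eq (by fun_prop) continuous_const
    have eq_inter : projectorsOfRank n k = {P | IsStarProjection P} ∩ {P | P.trace = (k : ℝ)} :=
      Set.ext fun _ => mem_projectorsOfRank_iff_trace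
    exact eq_inter ▸ isClosed_isStarProjection.inter isClosed_trace_eq
  · refine isBounded_iff_forall_norm_le.2 ⟨√k, fun P hP => ?_⟩
    exact Real.le_sqrt_of_sq_le (frobenius_norm_sq_of_mem_projectorsOfRank hP).le

lemma one_sub_mem_projectorsOfRank [DecidableEq n] {P : Matrix n n ℝ} {k : ℕ}
    (hk : k ≤ Fintype.card n) (hP : P ∈ projectorsOfRank n (Fintype.card n - k)) :
    1 - P ∈ projectorsOfRank n k := by
  rw [mem_projectorsOfRank_iff_trace] at hP ⊢
  refine ⟨hP.1.one_sub, ?_⟩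
  rw [trace_sub, trace_one, hP.2, Nat.cast_sub hk, sub_sub_cancel]

lemma isStarProjection_diagonal_indicator [DecidableEq n] (s : Finset n) :
    IsStarProjection (diagonal ((s : Set n).indicator (1 : n → ℝ))) := by
  refine ⟨?_, isHermitian_diagonal _⟩
  rw [IsIdempotentElem, diagonal_mul_diagonal', ← Set.indicator_mul]
  simp only [Pi.one_apply, mul_one, Pi.one_def]

open Unitary in
lemma conjStarAlgAut_diagonal_indicator_mem_projectorsOfRank [DecidableEq n]
    (u : unitaryGroup n ℝ) (s : Finset n) :
    conjStarAlgAut ℝ _ u (diagonal ((s : Set n).indicator (1 : n → ℝ))) ∈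
      projectorsOfRank n s.card := by
  refine mem_projectorsOfRank_iff_trace.2 ⟨(isStarProjection_diagonal_indicator s).map _, ?_⟩
  rw [trace_conjStarAlgAut, trace_diagonal]
  simp [Set.indicator_apply]

open Unitary in
lemma frobenius_norm_sq_conjStarAlgAut_diagonal_indicator_mul [DecidableEq n]
    {M : Matrix n κ ℝ} {u : unitaryGroup n ℝ} {d : n → ℝ}
    (hM : M * Mᵀ = conjStarAlgAut ℝ _ u (diagonal d)) (s : Finset n) :
    ‖conjStarAlgAut ℝ _ u (diagonal ((s : Set n).indicator (1 : n → ℝ))) * M‖ ^ 2 =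
      ∑ i ∈ s, d i := by
  rw [frobenius_norm_sq_mul_of_isStarProjection ((isStarProjection_diagonal_indicator s).map _),
    hM, ← map_mul, trace_conjStarAlgAut, diagonal_mul_diagonal, trace_diagonal]
  simp [Set.indicator_apply]

lemma exists_mem_projectorsOfRank_mul_eq_zero (N : Matrix n κ ℝ) {k : ℕ}
    (hk : k + N.rank ≤ Fintype.card n) : ∃ P ∈ projectorsOfRank n k, P * N = 0 := by
  classical
  have hN : (N * Nᵀ).IsHermitian := isHermitian_mul_conjTranspose_self N
  have k_le : k ≤ (Finset.univ.filter fun i => hN.eigenvalues i = 0).card := by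
    have h := hN.rank_eq_card_non_zero_eigs
    rw [rank_self_mul_transpose, Fintype.card_subtype_compl, Fintype.card_subtype] at h
    omega
  obtain ⟨s, s_subset, rfl⟩ := Finset.exists_subset_card_eq k_le
  refine ⟨_, conjStarAlgAut_diagonal_indicator_mem_projectorsOfRank hN.eigenvectorUnitary s, ?_⟩
  rw [← norm_eq_zero, ← sq_eq_zero_iff,
    frobenius_norm_sq_conjStarAlgAut_diagonal_indicator_mul hN.spectral_theorem]
  exact Finset.sum_eq_zero fun i hi => (Finset.mem_filter.1 (s_subset hi)).2

lemma projectorsOfRank_nonempty {k : ℕ} (hk : k ≤ Fintype.card n) :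
    (projectorsOfRank n k).Nonempty := by
  obtain ⟨P, hP, -⟩ :=
    exists_mem_projectorsOfRank_mul_eq_zero (0 : Matrix n n ℝ) (k := k) (by simpa using hk)
  exact ⟨P, hP⟩

end Projectors

section TailNorm

open scoped Matrix.Norms.Frobenius

variable {n κ : Type*} [Fintype n] [Fintype κ]

lemma sum_le_sum_mul_of_threshold {ι : Type*} [Fintype ι] {s : Finset ι} {d w : ι → ℝ} {c : ℝ}
    (hds : ∀ i ∈ s, d i ≤ c) (hdsc : ∀ i ∉ s, c ≤ d i) (hw : ∀ i, w i ∈ Set.Icc (0 : ℝ) 1)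
    (hsum : ∑ i, w i = s.card) : ∑ i ∈ s, d i ≤ ∑ i, d i * w i := by
  classical
  have termwise : ∀ i,
      c * (w i - if i ∈ s then 1 else 0) ≤ d i * (w i - if i ∈ s then 1 else 0) := by
    intro i
    split_ifs with hi
    · nlinarith [hds i hi, (hw i).2]
    · nlinarith [hdsc i hi, (hw i).1]
  have total := Finset.sum_le_sum fun i (_ : i ∈ Finset.univ) => termwise i
  simp only [mul_sub, Finset.sum_sub_distrib, ← Finset.mul_sum, hsum, mul_ite, mul_one, mul_zero,
    Finset.sum_ite_mem, Finset.univ_inter, Finset.sum_const, nsmul_eq_mul] at total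
  linarith

/-- The Euclidean norm of the `k` smallest singular values of a matrix with rows indexed by `n`
(see `tailNorm_sq_eq_sum`). It is defined by Ky Fan's variational principle, which makes it
manifestly continuous. For `k > card n` the infimum is over the empty set and the value is `0`. -/
def tailNorm (k : ℕ) (M : Matrix n κ ℝ) : ℝ :=
  sInf ((fun P => ‖P * M‖) '' projectorsOfRank n k)

lemma tailNorm_le {k : ℕ} (M : Matrix n κ ℝ) {P : Matrix n n ℝ} (hP : P ∈ projectorsOfRank n k) :
    tailNorm k M ≤ ‖P * M‖ :=
  csInf_le ⟨0, Set.forall_mem_image.2 fun _ _ => norm_nonneg _⟩ (Set.mem_image_of_mem _ hP)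

lemma exists_tailNorm_eq {k : ℕ} (hk : k ≤ Fintype.card n) (M : Matrix n κ ℝ) :
    ∃ P ∈ projectorsOfRank n k, tailNorm k M = ‖P * M‖ :=
  (isCompact_projectorsOfRank k).exists_sInf_image_eq (projectorsOfRank_nonempty hk) (by fun_prop)

lemma tailNorm_nonneg (k : ℕ) (M : Matrix n κ ℝ) : 0 ≤ tailNorm k M :=
  Real.sInf_nonneg (Set.forall_mem_image.2 fun _ _ => norm_nonneg _)

lemma continuous_tailNorm (k : ℕ) : Continuous (tailNorm k : Matrix n κ ℝ → ℝ) :=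
  (isCompact_projectorsOfRank k).continuous_sInf (f := fun M P => ‖P * M‖)
    (Continuous.norm (f := fun x : Matrix n κ ℝ × Matrix n n ℝ => x.2 * x.1) (by fun_prop))

lemma tailNorm_smul (k : ℕ) (c : ℝ) (M : Matrix n κ ℝ) :
    tailNorm k (c • M) = |c| * tailNorm k M := by
  rw [tailNorm, tailNorm, ← smul_eq_mul, ← Real.sInf_smul_of_nonneg (abs_nonneg c),
    ← Set.image_smul, Set.image_image]
  simp only [Matrix.mul_smul, norm_smul, Real.norm_eq_abs, smul_eq_mul]

section Eigenvalues

variable [DecidableEq n] {M : Matrix n κ ℝ} {d : n → ℝ}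

open Unitary in
lemma exists_mul_transpose_eq_conjStarAlgAut_diagonal
    (hM : (M * Mᵀ).charpoly = ∏ i, (X - C (d i))) :
    ∃ u : unitaryGroup n ℝ, M * Mᵀ = conjStarAlgAut ℝ _ u (diagonal d) :=
  exists_eq_conjStarAlgAut_diagonal (isHermitian_mul_conjTranspose_self M) hM

open Unitary in
lemma sum_le_frobenius_norm_sq_mul (hM : (M * Mᵀ).charpoly = ∏ i, (X - C (d i)))
    {s : Finset n} {c : ℝ} (hds : ∀ i ∈ s, d i ≤ c) (hdsc : ∀ i ∉ s, c ≤ d i)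
    {P : Matrix n n ℝ} (hP : P ∈ projectorsOfRank n s.card) :
    ∑ i ∈ s, d i ≤ ‖P * M‖ ^ 2 := by
  obtain ⟨u, hu⟩ := exists_mul_transpose_eq_conjStarAlgAut_diagonal hM
  set P' := conjStarAlgAut ℝ _ (star u) P with hP'
  have isStarProjection_P' : IsStarProjection P' := hP.1.map _
  have P_eq : P = conjStarAlgAut ℝ _ u P' := by
    rw [hP', ← conjStarAlgAut_mul_apply, mul_star_self, map_one]; rfl
  have trace_P' : ∑ i, P' i i = s.card := by
    rw [← (mem_projectorsOfRank_iff_trace.1 hP).2, P_eq, trace_conjStarAlgAut]; rfl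
  calc ∑ i ∈ s, d i ≤ ∑ i, d i * P' i i :=
        sum_le_sum_mul_of_threshold hds hdsc
          (diag_mem_Icc_of_isStarProjection isStarProjection_P') trace_P'
    _ = ‖P * M‖ ^ 2 := by
        rw [frobenius_norm_sq_mul_of_isStarProjection hP.1, hu, P_eq, ← map_mul,
          trace_conjStarAlgAut, trace_mul_comm]
        simp [Matrix.trace, diagonal_mul]

lemma tailNorm_sq_eq_sum (hM : (M * Mᵀ).charpoly = ∏ i, (X - C (d i)))
    {s : Finset n} {c : ℝ} (hds : ∀ i ∈ s, d i ≤ c) (hdsc : ∀ i ∉ s, c ≤ d i) :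
    tailNorm s.card M ^ 2 = ∑ i ∈ s, d i := by
  apply le_antisymm
  · obtain ⟨u, hu⟩ := exists_mul_transpose_eq_conjStarAlgAut_diagonal hM
    rw [← frobenius_norm_sq_conjStarAlgAut_diagonal_indicator_mul hu]
    exact pow_le_pow_left₀ (tailNorm_nonneg _ _)
      (tailNorm_le M (conjStarAlgAut_diagonal_indicator_mem_projectorsOfRank u s)) 2
  · obtain ⟨P, hP, tailNorm_eq⟩ := exists_tailNorm_eq s.card_le_univ M
    exact tailNorm_eq ▸ sum_le_frobenius_norm_sq_mul hM hds hdsc hP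

end Eigenvalues

lemma tailNorm_sq_eq_sum_singularValues {p : ℕ} (m : ℕ) {M : Matrix (Fin p) κ ℝ} {σ : Fin p → ℝ}
    (hσ : Antitone σ) (hσ0 : ∀ k, 0 ≤ σ k)
    (hM : (M * Mᵀ).charpoly = ∏ k, (X - C (σ k ^ 2))) :
    tailNorm (p - m) M ^ 2 = ∑ k : Fin p, if m ≤ (k : ℕ) then σ k ^ 2 else 0 := by
  have sq_le_sq_of_le : ∀ i j, i ≤ j → σ j ^ 2 ≤ σ i ^ 2 :=
    fun i j hij => pow_le_pow_left₀ (hσ0 j) (hσ hij) 2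
  have card_tail : (Finset.univ.filter fun k : Fin p => m ≤ (k : ℕ)).card = p - m := by
    have := Fin.card_filter_val_lt (n := p) (m := m)
    have := Finset.card_filter_add_card_filter_not (s := Finset.univ) fun k : Fin p => (k : ℕ) < m
    simp only [not_lt, Finset.card_fin] at this
    omega
  rw [← Finset.sum_filter, ← card_tail]
  obtain hm | hm := lt_or_ge m p
  · refine tailNorm_sq_eq_sum hM (c := σ ⟨m, hm⟩ ^ 2) (fun k hk => ?_) (fun k hk => ?_)
    · exact sq_le_sq_of_le _ _ (Finset.mem_filter.1 hk).2
    · refine sq_le_sq_of_le _ _ (le_of_not_ge fun h => hk ?_)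
      exact Finset.mem_filter.2 ⟨Finset.mem_univ k, h⟩
  · refine tailNorm_sq_eq_sum hM (c := 0) (fun k hk => ?_) (fun k _ => sq_nonneg (σ k))
    exact absurd (hm.trans (Finset.mem_filter.1 hk).2) k.is_lt.not_ge

end TailNorm

section Perturbation

open scoped Matrix.Norms.Frobenius

lemma exists_mul_eq_of_range_mulVecLin_le {K m n κ : Type*} [Field K] [Fintype m] [Fintype κ]
    {A : Matrix n κ K} {D : Matrix n m K}
    (h : LinearMap.range D.mulVecLin ≤ LinearMap.range A.mulVecLin) :
    ∃ B : Matrix κ m K, A * B = D := by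
  classical
  have col_mem : ∀ j, ∃ v, A *ᵥ v = D.col j := fun j =>
    h ⟨Pi.single j 1, mulVec_single_one D j⟩
  choose v hv using col_mem
  exact ⟨of fun i j => v j i, Matrix.ext fun i j => congrFun (hv j) i⟩

variable {n κ : Type*} [Fintype n] [Fintype κ]

section DistProjectors

variable [DecidableEq n] {P Q : Matrix n n ℝ} {k : ℕ}

lemma frobenius_norm_sub_sq_of_mem_projectorsOfRank (hP : P ∈ projectorsOfRank n k)
    (hQ : Q ∈ projectorsOfRank n k) : ‖P - Q‖ ^ 2 = 2 * ‖P * (1 - Q)‖ ^ 2 := by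
  have norm_sq_left : ‖P - Q‖ ^ 2 = 2 * (k - (P * Q).trace) := by
    rw [frobenius_norm_sq_eq_trace, transpose_sub, transpose_eq_of_isStarProjection hP.1,
      transpose_eq_of_isStarProjection hQ.1]
    simp only [Matrix.mul_sub, Matrix.sub_mul, trace_sub, hP.1.isIdempotentElem.eq,
      hQ.1.isIdempotentElem.eq, (mem_projectorsOfRank_iff_trace.1 hP).2,
      (mem_projectorsOfRank_iff_trace.1 hQ).2, trace_mul_comm Q P]
    ring
  have norm_sq_right : ‖P * (1 - Q)‖ ^ 2 = k - (P * Q).trace := by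
    rw [frobenius_norm_sq_mul_of_isStarProjection hP.1,
      transpose_eq_of_isStarProjection hQ.1.one_sub, hQ.1.one_sub.isIdempotentElem.eq,
      Matrix.mul_sub, Matrix.mul_one, trace_sub, (mem_projectorsOfRank_iff_trace.1 hP).2]
  rw [norm_sq_left, norm_sq_right]

lemma frobenius_norm_sub_le_of_mem_projectorsOfRank (hP : P ∈ projectorsOfRank n k)
    (hQ : Q ∈ projectorsOfRank n k) {A : Matrix n κ ℝ} {B : Matrix κ n ℝ} (hAB : A * B = 1 - Q) :
    ‖P - Q‖ ≤ 2 * ‖B‖ * ‖P * A‖ := by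
  have norm_mul_one_sub_le : ‖P * (1 - Q)‖ ≤ ‖P * A‖ * ‖B‖ := by
    rw [← hAB, ← Matrix.mul_assoc]
    exact frobenius_norm_mul _ _
  have norm_sub_le : ‖P - Q‖ ≤ 2 * ‖P * (1 - Q)‖ := by
    refine le_of_sq_le_sq ?_ (by positivity)
    rw [frobenius_norm_sub_sq_of_mem_projectorsOfRank hP hQ]
    nlinarith [sq_nonneg ‖P * (1 - Q)‖]
  linarith

end DistProjectors

/-- `Q₁` and `Q₂` are the orthogonal projectors onto the left and right null spaces of `M`, i.e.
onto the singular subspaces of its zero singular values. -/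
structure IsNullProjectorPair (M : Matrix n κ ℝ) (Q₁ : Matrix n n ℝ) (Q₂ : Matrix κ κ ℝ) :
    Prop where
  left_mem : Q₁ ∈ projectorsOfRank n (Fintype.card n - M.rank)
  right_mem : Q₂ ∈ projectorsOfRank κ (Fintype.card κ - M.rank)
  left_mul : Q₁ * M = 0
  mul_right : M * Q₂ = 0

namespace IsNullProjectorPair

variable {M : Matrix n κ ℝ} {Q₁ : Matrix n n ℝ} {Q₂ : Matrix κ κ ℝ}

lemma of_transpose_eq (mul_self_left : Q₁ * Q₁ = Q₁) (transpose_left : Q₁ᵀ = Q₁)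
    (left_mul : Q₁ * M = 0) (rank_left : Q₁.rank = Fintype.card n - M.rank)
    (mul_self_right : Q₂ * Q₂ = Q₂) (transpose_right : Q₂ᵀ = Q₂)
    (mul_right : M * Q₂ = 0) (rank_right : Q₂.rank = Fintype.card κ - M.rank) :
    IsNullProjectorPair M Q₁ Q₂ where
  left_mem :=
    ⟨⟨mul_self_left, (conjTranspose_eq_transpose_of_trivial Q₁).trans transpose_left⟩, rank_left⟩
  right_mem :=
    ⟨⟨mul_self_right, (conjTranspose_eq_transpose_of_trivial Q₂).trans transpose_right⟩, rank_right⟩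
  left_mul := left_mul
  mul_right := mul_right

lemma exists_mul_eq_one_sub [DecidableEq n] (h : IsNullProjectorPair M Q₁ Q₂) :
    ∃ B : Matrix κ n ℝ, M * B = 1 - Q₁ := by
  have one_sub_mul : (1 - Q₁) * M = M := by
    rw [Matrix.sub_mul, h.left_mul, sub_zero, Matrix.one_mul]
  have range_le : LinearMap.range M.mulVecLin ≤ LinearMap.range (1 - Q₁).mulVecLin := by
    conv_lhs => rw [← one_sub_mul, mulVecLin_mul]
    exact LinearMap.range_comp_le_range _ _
  have rank_eq : (1 - Q₁).rank = M.rank :=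
    (one_sub_mem_projectorsOfRank M.rank_le_card_height h.left_mem).2
  exact exists_mul_eq_of_range_mulVecLin_le
    (Submodule.eq_of_le_of_finrank_eq range_le rank_eq.symm).ge

lemma abs_norm_sub_norm_le [DecidableEq n] (h : IsNullProjectorPair M Q₁ Q₂) {B : Matrix κ n ℝ}
    (hB : M * B = 1 - Q₁) {s : ℝ} (hs : s ≠ 0) {Z : Matrix n κ ℝ} {P : Matrix n n ℝ}
    (hP : P ∈ projectorsOfRank n (Fintype.card n - M.rank)) (hPZ : ‖P * (s • M + Z)‖ ≤ ‖Z‖) :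
    |‖P * Z * Q₂‖ - ‖Q₁ * Z * Q₂‖| ≤ 4 * ‖B‖ * ‖Z‖ ^ 2 / |s| := by
  have norm_mul_le : ‖P * M‖ ≤ 2 * ‖Z‖ / |s| := by
    rw [le_div_iff₀ (abs_pos.2 hs), mul_comm, ← Real.norm_eq_abs, ← norm_smul]
    calc ‖s • (P * M)‖ = ‖P * (s • M + Z) - P * Z‖ := by
          rw [Matrix.mul_add, Matrix.mul_smul, add_sub_cancel_right]
      _ ≤ ‖P * (s • M + Z)‖ + ‖P * Z‖ := norm_sub_le _ _
      _ ≤ 2 * ‖Z‖ := by linarith [frobenius_norm_mul_le_of_isStarProjection hP.1 Z]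
  calc |‖P * Z * Q₂‖ - ‖Q₁ * Z * Q₂‖| ≤ ‖P * Z * Q₂ - Q₁ * Z * Q₂‖ :=
        _root_.abs_norm_sub_norm_le _ _
    _ = ‖(P - Q₁) * Z * Q₂‖ := by rw [Matrix.sub_mul, Matrix.sub_mul]
    _ ≤ ‖(P - Q₁) * Z‖ := frobenius_norm_mul_isStarProjection_le h.right_mem.1 _
    _ ≤ ‖P - Q₁‖ * ‖Z‖ := frobenius_norm_mul _ _
    _ ≤ 2 * ‖B‖ * (2 * ‖Z‖ / |s|) * ‖Z‖ := by
        gcongr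
        exact (frobenius_norm_sub_le_of_mem_projectorsOfRank hP h.left_mem hB).trans (by gcongr)
    _ = 4 * ‖B‖ * ‖Z‖ ^ 2 / |s| := by ring

lemma mul_smul_add_mul_right (h : IsNullProjectorPair M Q₁ Q₂) (P : Matrix n n ℝ) (s : ℝ)
    (Z : Matrix n κ ℝ) : P * (s • M + Z) * Q₂ = P * Z * Q₂ := by
  rw [Matrix.mul_assoc, Matrix.add_mul, Matrix.smul_mul, h.mul_right, smul_zero, zero_add,
    Matrix.mul_assoc]

lemma tailNorm_smul_add_le (h : IsNullProjectorPair M Q₁ Q₂) (s : ℝ) (Z : Matrix n κ ℝ) :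
    tailNorm (Fintype.card n - M.rank) (s • M + Z) ≤ ‖Z‖ := by
  refine (tailNorm_le _ h.left_mem).trans ?_
  rw [Matrix.mul_add, Matrix.mul_smul, h.left_mul, smul_zero, zero_add]
  exact frobenius_norm_mul_le_of_isStarProjection h.left_mem.1 Z

lemma exists_mul_smul_add_eq (h : IsNullProjectorPair M Q₁ Q₂) (s : ℝ) (Z : Matrix n κ ℝ) :
    ∃ P ∈ projectorsOfRank n (Fintype.card n - M.rank), P * (s • M + Z) = P * Z * Q₂ := by
  classical
  have rank_le : ((s • M + Z) * (1 - Q₂)).rank ≤ M.rank := by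
    refine (rank_mul_le_right _ _).trans_eq ?_
    exact (one_sub_mem_projectorsOfRank M.rank_le_card_width h.right_mem).2
  obtain ⟨P, hP, mul_eq_zero⟩ := exists_mem_projectorsOfRank_mul_eq_zero ((s • M + Z) * (1 - Q₂))
    (k := Fintype.card n - M.rank) (by have := M.rank_le_card_height; omega)
  refine ⟨P, hP, ?_⟩
  rwa [Matrix.mul_sub, Matrix.mul_one, Matrix.mul_sub, ← Matrix.mul_assoc,
    h.mul_smul_add_mul_right, sub_eq_zero] at mul_eq_zero

theorem exists_abs_tailNorm_sub_le (h : IsNullProjectorPair M Q₁ Q₂) :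
    ∃ K : ℝ, ∀ (s : ℝ) (Z : Matrix n κ ℝ), s ≠ 0 →
      |tailNorm (Fintype.card n - M.rank) (s • M + Z) - ‖Q₁ * Z * Q₂‖| ≤ K * ‖Z‖ ^ 2 / |s| := by
  classical
  obtain ⟨B, hB⟩ := h.exists_mul_eq_one_sub
  refine ⟨4 * ‖B‖, fun s Z hs => abs_sub_le_iff.2 ⟨?_, ?_⟩⟩
  · obtain ⟨P, hP, mul_eq⟩ := h.exists_mul_smul_add_eq s Z
    have mul_le : ‖P * (s • M + Z)‖ ≤ ‖Z‖ := by
      rw [mul_eq]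
      exact (frobenius_norm_mul_isStarProjection_le h.right_mem.1 _).trans
        (frobenius_norm_mul_le_of_isStarProjection hP.1 Z)
    have compare := abs_le.1 (h.abs_norm_sub_norm_le hB hs hP mul_le)
    have := tailNorm_le (s • M + Z) hP
    rw [mul_eq] at this
    linarith
  · obtain ⟨P, hP, tailNorm_eq⟩ := exists_tailNorm_eq (Nat.sub_le _ M.rank) (s • M + Z)
    have compare := abs_le.1
      (h.abs_norm_sub_norm_le hB hs hP (tailNorm_eq ▸ h.tailNorm_smul_add_le s Z))
    have := frobenius_norm_mul_isStarProjection_le h.right_mem.1 (P * (s • M + Z))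
    rw [h.mul_smul_add_mul_right, ← tailNorm_eq] at this
    linarith

end IsNullProjectorPair

/-- The function `(Z, t) ↦ tailNorm (t⁻¹ M + Z)`, extended to `t = 0` by its limit
`‖Q₁ Z Q₂‖` so as to be jointly continuous. -/
def rescaledTailNorm (M : Matrix n κ ℝ) (Q₁ : Matrix n n ℝ) (Q₂ : Matrix κ κ ℝ)
    (x : Matrix n κ ℝ × ℝ) : ℝ :=
  if x.2 = 0 then ‖Q₁ * x.1 * Q₂‖ else tailNorm (Fintype.card n - M.rank) (x.2⁻¹ • M + x.1)

namespace IsNullProjectorPair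

variable {M : Matrix n κ ℝ} {Q₁ : Matrix n n ℝ} {Q₂ : Matrix κ κ ℝ}

lemma exists_norm_rescaledTailNorm_sub_le (h : IsNullProjectorPair M Q₁ Q₂) :
    ∃ K : ℝ, ∀ x : Matrix n κ ℝ × ℝ,
      ‖rescaledTailNorm M Q₁ Q₂ x - ‖Q₁ * x.1 * Q₂‖‖ ≤ K * ‖x.1‖ ^ 2 * |x.2| := by
  obtain ⟨K, hK⟩ := h.exists_abs_tailNorm_sub_le
  refine ⟨K, fun ⟨Z, t⟩ => ?_⟩
  obtain rfl | ht := eq_or_ne t 0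
  · simp [rescaledTailNorm]
  · simpa [rescaledTailNorm, ht, abs_inv] using hK t⁻¹ Z (inv_ne_zero ht)

theorem continuous_rescaledTailNorm (h : IsNullProjectorPair M Q₁ Q₂) :
    Continuous (rescaledTailNorm M Q₁ Q₂) := by
  have continuous_limit : Continuous fun x : Matrix n κ ℝ × ℝ => ‖Q₁ * x.1 * Q₂‖ :=
    Continuous.norm (f := fun x : Matrix n κ ℝ × ℝ => Q₁ * x.1 * Q₂) (by fun_prop)
  refine continuous_iff_continuousAt.2 fun ⟨Z, t⟩ => ?_
  obtain rfl | ht := eq_or_ne t 0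
  · obtain ⟨K, hK⟩ := h.exists_norm_rescaledTailNorm_sub_le
    have bound_tendsto : Tendsto (fun x : Matrix n κ ℝ × ℝ => K * ‖x.1‖ ^ 2 * |x.2|)
        (𝓝 (Z, 0)) (𝓝 0) := by
      have : Continuous fun x : Matrix n κ ℝ × ℝ => K * ‖x.1‖ ^ 2 * |x.2| := by fun_prop
      simpa using this.tendsto (Z, 0)
    have value_at_zero : rescaledTailNorm M Q₁ Q₂ (Z, 0) = ‖Q₁ * Z * Q₂‖ := if_pos rfl
    simpa [ContinuousAt, value_at_zero] using
      (squeeze_zero_norm hK bound_tendsto).add (continuous_limit.tendsto (Z, 0))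
  · have eventually_eq : (fun x : Matrix n κ ℝ × ℝ =>
        tailNorm (Fintype.card n - M.rank) (x.2⁻¹ • M + x.1)) =ᶠ[𝓝 (Z, t)]
        rescaledTailNorm M Q₁ Q₂ := by
      filter_upwards [continuous_snd.continuousAt.eventually_ne ht] with x hx
      rw [rescaledTailNorm, if_neg hx]
    refine ContinuousAt.congr ((continuous_tailNorm _).continuousAt.comp ?_) eventually_eq
    exact ((continuousAt_snd.inv₀ ht).smul continuousAt_const).add continuousAt_fst

end IsNullProjectorPair

end Perturbation

section Distribution

variable {Ω : Type*} [MeasurableSpace Ω] {μ : Measure Ω} [IsProbabilityMeasure μ]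

section Borel

variable {E : Type*} [TopologicalSpace E] [MeasurableSpace E] [OpensMeasurableSpace E]
  {X : ℕ → Ω → E}

/- The Bochner integral of a non-integrable function is `0`. If `f ∘ X n` is not integrable, then
neither is `(f + 1) ∘ X n`, and both integrals vanish, whereas their difference tends to `1`. -/
lemma TendstoInDistribution.eventually_integrable_comp {L : Measure E} [IsProbabilityMeasure L]
    (hX : TendstoInDistribution μ X L) (f : BoundedContinuousFunction E ℝ) :
    ∀ᶠ n in atTop, Integrable (fun ω => f (X n ω)) μ := by
  have limit_sub : (∫ x, (f + 1) x ∂L) - ∫ x, f x ∂L = 1 := by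
    rw [← integral_sub ((f + 1).integrable L) (f.integrable L)]
    simp
  have tendsto_sub := (hX (f + 1)).sub (hX f)
  rw [limit_sub] at tendsto_sub
  filter_upwards [tendsto_sub.eventually_ne one_ne_zero] with n hn
  contrapose! hn
  have not_integrable_add_one : ¬ Integrable (fun ω => (f + 1) (X n ω)) μ := fun h =>
    hn <| by simpa [Pi.sub_def] using h.sub (integrable_const 1)
  rw [integral_undef hn, integral_undef not_integrable_add_one, sub_zero]

lemma tendstoInDistribution_map_iff {Ω' : Type*} [MeasurableSpace Ω'] {ν : Measure Ω'}
    [IsProbabilityMeasure ν] {Z : Ω' → E} (hX : ∀ n, AEMeasurable (X n) μ)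
    (hZ : AEMeasurable Z ν) :
    TendstoInDistribution μ X (ν.map Z) ↔
      MeasureTheory.TendstoInDistribution X atTop Z (fun _ => μ) ν := by
  have integral_map_eq (n : ℕ) (f : BoundedContinuousFunction E ℝ) :
      ∫ x, f x ∂(μ.map (X n)) = ∫ ω, f (X n ω) ∂μ :=
    integral_map (hX n) f.continuous.measurable.aestronglyMeasurable
  refine ⟨fun h => ⟨hX, hZ, ?_⟩, fun h f => ?_⟩
  · refine ProbabilityMeasure.tendsto_iff_forall_integral_tendsto.2 fun f => ?_
    simpa only [ProbabilityMeasure.coe_mk, integral_map_eq] using h f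
  · simpa only [ProbabilityMeasure.coe_mk, integral_map_eq] using
      ProbabilityMeasure.tendsto_iff_forall_integral_tendsto.1 h.tendsto f

end Borel

variable {ι : Type*} [Finite ι] {X : ℕ → Ω → ι → ℝ} {L : Measure (ι → ℝ)} [IsProbabilityMeasure L]

lemma TendstoInDistribution.eventually_aemeasurable (hX : TendstoInDistribution μ X L) :
    ∀ᶠ n in atTop, AEMeasurable (X n) μ := by
  have arctan_embedding : MeasurableEmbedding Real.arctan :=
    Real.continuous_arctan.measurableEmbedding Real.arctan_injective
  let arctanCoord (i : ι) : BoundedContinuousFunction (ι → ℝ) ℝ :=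
    .ofNormedAddCommGroup (fun x => Real.arctan (x i)) (by fun_prop) (Real.pi / 2) fun x =>
      abs_le.2 ⟨(Real.neg_pi_div_two_lt_arctan _).le, (Real.arctan_lt_pi_div_two _).le⟩
  filter_upwards [eventually_all.2 fun i => hX.eventually_integrable_comp (arctanCoord i)] with n hn
  exact aemeasurable_pi_lambda _ fun i =>
    arctan_embedding.aemeasurable_comp_iff.1 (hn i).aemeasurable

theorem TendstoInDistribution.comp_prodMk_of_tendsto {E F : Type*} [SeminormedAddCommGroup E]
    [SecondCountableTopology E] [TopologicalSpace F] [MeasurableSpace F] [BorelSpace F]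
    (hX : TendstoInDistribution μ X L) {t : ℕ → E} {t₀ : E} (ht : Tendsto t atTop (𝓝 t₀))
    {g : (ι → ℝ) × E → F} (hg : Continuous g) :
    TendstoInDistribution μ (fun n ω => g (X n ω, t n)) (L.map fun x => g (x, t₀)) := by
  borelize E
  cases nonempty_fintype ι
  obtain ⟨N, hN⟩ := eventually_atTop.1 hX.eventually_aemeasurable
  have aemeasurable_shift (n : ℕ) : AEMeasurable (X (n + N)) μ := hN _ (Nat.le_add_left N n)
  have shift_tendsto : MeasureTheory.TendstoInDistribution (fun n => X (n + N)) atTop id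
      (fun _ => μ) L := by
    refine (tendstoInDistribution_map_iff aemeasurable_shift aemeasurable_id).1 fun f => ?_
    rw [Measure.map_id]
    exact (tendsto_add_atTop_iff_nat N).2 (hX f)
  have tendstoInMeasure_shift : TendstoInMeasure μ (fun n _ => t (n + N)) atTop fun _ => t₀ :=
    tendstoInMeasure_of_tendsto_ae (fun _ => aestronglyMeasurable_const)
      (ae_of_all _ fun _ => (tendsto_add_atTop_iff_nat N).2 ht)
  have slutsky := shift_tendsto.continuous_comp_prodMk_of_tendstoInMeasure_const hg
    tendstoInMeasure_shift fun _ => aemeasurable_const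
  intro f
  rw [← tendsto_add_atTop_iff_nat N]
  exact (tendstoInDistribution_map_iff slutsky.forall_aemeasurable
    slutsky.aemeasurable_limit).2 slutsky f

end Distribution

section Gaussian

variable {ι : Type*} [Fintype ι]

instance isProbabilityMeasure_stdGaussianPi : IsProbabilityMeasure (stdGaussianPi ι) := by
  unfold stdGaussianPi
  infer_instance

variable [DecidableEq ι]

instance isProbabilityMeasure_gaussianPi (Γ : Matrix ι ι ℝ) :
    IsProbabilityMeasure (gaussianPi Γ) :=
  Measure.isProbabilityMeasure_map (by fun_prop)

lemma stdGaussianPi_map_unitary_mulVec (u : unitaryGroup ι ℝ) :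
    (stdGaussianPi ι).map (fun z => (u : Matrix ι ι ℝ) *ᵥ z) = stdGaussianPi ι := by
  have map_toLp : (stdGaussianPi ι).map (WithLp.toLp 2) = stdGaussian (EuclideanSpace ℝ ι) :=
    map_pi_eq_stdGaussian
  have map_ofLp : (stdGaussian (EuclideanSpace ℝ ι)).map WithLp.ofLp = stdGaussianPi ι := by
    rw [← map_toLp, Measure.map_map (by fun_prop) (by fun_prop)]
    exact Measure.map_id
  let rotation : EuclideanSpace ℝ ι ≃ₗᵢ[ℝ] EuclideanSpace ℝ ι :=
    Unitary.linearIsometryEquiv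
      ⟨toEuclideanCLM (n := ι) (𝕜 := ℝ) u, Unitary.map_mem _ u.2⟩
  conv_rhs => rw [← map_ofLp, ← stdGaussian_map rotation, ← map_toLp]
  rw [Measure.map_map (by fun_prop) (by fun_prop), Measure.map_map (by fun_prop) (by fun_prop)]
  rfl

lemma stdGaussianPi_map_dotProduct_mulVec {A : Matrix ι ι ℝ} (hA : A.IsHermitian) {ν : ι → ℝ}
    (hν : A.charpoly = ∏ k, (X - C (ν k))) :
    (stdGaussianPi ι).map (fun z => z ⬝ᵥ A *ᵥ z) =
      (stdGaussianPi ι).map fun w => ∑ k, ν k * w k ^ 2 := by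
  obtain ⟨u, rfl⟩ := exists_eq_conjStarAlgAut_diagonal hA hν
  conv_rhs => rw [← stdGaussianPi_map_unitary_mulVec (star u)]
  rw [Measure.map_map (by fun_prop) (by fun_prop)]
  congr 1 with z
  calc z ⬝ᵥ Unitary.conjStarAlgAut ℝ _ u (diagonal ν) *ᵥ z
      = z ᵥ* u ⬝ᵥ diagonal ν *ᵥ star (u : Matrix ι ι ℝ) *ᵥ z := by
        rw [Unitary.conjStarAlgAut_apply, ← mulVec_mulVec, ← mulVec_mulVec, dotProduct_mulVec]
    _ = star (u : Matrix ι ι ℝ) *ᵥ z ⬝ᵥ diagonal ν *ᵥ star (u : Matrix ι ι ℝ) *ᵥ z := by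
        rw [star_eq_conjTranspose, conjTranspose_eq_transpose_of_trivial, mulVec_transpose]
    _ = ∑ k, ν k * (star (u : Matrix ι ι ℝ) *ᵥ z) k ^ 2 := by
        simp only [dotProduct, mulVec_diagonal]
        exact Finset.sum_congr rfl fun k _ => by ring

lemma matSqrt_eq_conjStarAlgAut {Γ : Matrix ι ι ℝ} (hΓ : Γ.PosSemidef) :
    matSqrt Γ = Unitary.conjStarAlgAut ℝ _ hΓ.1.eigenvectorUnitary
      (diagonal (Real.sqrt ∘ hΓ.1.eigenvalues)) :=
  dif_pos hΓ

lemma transpose_matSqrt {Γ : Matrix ι ι ℝ} (hΓ : Γ.PosSemidef) : (matSqrt Γ)ᵀ = matSqrt Γ := by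
  rw [← conjTranspose_eq_transpose_of_trivial, matSqrt_eq_conjStarAlgAut hΓ]
  have isSelfAdjoint : IsSelfAdjoint (diagonal (Real.sqrt ∘ hΓ.1.eigenvalues)) :=
    isHermitian_diagonal _
  exact isSelfAdjoint.map (Unitary.conjStarAlgAut ℝ _ hΓ.1.eigenvectorUnitary)

lemma matSqrt_mul_self {Γ : Matrix ι ι ℝ} (hΓ : Γ.PosSemidef) : matSqrt Γ * matSqrt Γ = Γ := by
  conv_rhs => rw [hΓ.1.spectral_theorem]
  rw [matSqrt_eq_conjStarAlgAut hΓ, ← map_mul, diagonal_mul_diagonal]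
  congr 2
  exact funext fun i => Real.mul_self_sqrt (hΓ.eigenvalues_nonneg i)

theorem gaussianPi_map_mulVec_dotProduct_mulVec {Γ : Matrix ι ι ℝ} (hΓ : Γ.PosSemidef)
    {K : Matrix ι ι ℝ} {ν : ι → ℝ} (hν : (K * Γ * Kᵀ).charpoly = ∏ k, (X - C (ν k))) :
    (gaussianPi Γ).map (fun z => (K *ᵥ z) ⬝ᵥ (K *ᵥ z)) =
      (stdGaussianPi ι).map fun w => ∑ k, ν k * w k ^ 2 := by
  set S := K * matSqrt Γ with hS
  have charpoly_eq : (Sᵀ * S).charpoly = ∏ k, (X - C (ν k)) := by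
    rw [charpoly_mul_comm, hS, transpose_mul, transpose_matSqrt hΓ, ← hν, Matrix.mul_assoc,
      ← Matrix.mul_assoc (matSqrt Γ), matSqrt_mul_self hΓ, ← Matrix.mul_assoc]
  have isHermitian : (Sᵀ * S).IsHermitian := isHermitian_conjTranspose_mul_self S
  rw [← stdGaussianPi_map_dotProduct_mulVec isHermitian charpoly_eq, gaussianPi,
    Measure.map_map (by fun_prop) (by fun_prop)]
  congr 1 with z
  rw [Function.comp_apply, mulVec_mulVec, dotProduct_mulVec, vecMul_mulVec, ← dotProduct_mulVec]

end Gaussian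

section Asymptotics

open scoped Matrix.Norms.Frobenius

variable {n κ : Type*}

/-- The matrix whose columns are stacked in the vector `z`, i.e. the inverse of `Matrix.vec`. -/
def unvec (z : κ × n → ℝ) : Matrix n κ ℝ :=
  of fun i j => z (j, i)

lemma vec_unvec (z : κ × n → ℝ) : vec (unvec z) = z := rfl

lemma unvec_smul_vec (c : ℝ) (A : Matrix n κ ℝ) : unvec (c • vec A) = c • A := rfl

@[fun_prop]
lemma continuous_unvec : Continuous (unvec : (κ × n → ℝ) → Matrix n κ ℝ) :=
  continuous_matrix fun _ _ => continuous_apply _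

variable [Fintype n] [Fintype κ] {M : Matrix n κ ℝ} {Q₁ : Matrix n n ℝ} {Q₂ : Matrix κ κ ℝ}
  {Ω : Type*} [MeasurableSpace Ω] {μ : Measure Ω} [IsProbabilityMeasure μ]
  {Mhat : ℕ → Ω → Matrix n κ ℝ} {a : ℕ → ℝ}

lemma frobenius_norm_sq_mul_unvec_mul (Q₁ : Matrix n n ℝ) (Q₂ : Matrix κ κ ℝ) (z : κ × n → ℝ) :
    ‖Q₁ * unvec z * Q₂‖ ^ 2 = ((Q₂ᵀ ⊗ₖ Q₁) *ᵥ z) ⬝ᵥ ((Q₂ᵀ ⊗ₖ Q₁) *ᵥ z) := by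
  rw [frobenius_norm_sq_eq_vec_dotProduct_vec, ← vec_unvec z, kronecker_mulVec_vec,
    transpose_transpose, vec_unvec]

lemma rescaledTailNorm_smul_sub_inv (M A : Matrix n κ ℝ) (Q₁ : Matrix n n ℝ) (Q₂ : Matrix κ κ ℝ)
    {s : ℝ} (hs : s ≠ 0) :
    rescaledTailNorm M Q₁ Q₂ (s • (A - M), s⁻¹) =
      |s| * tailNorm (Fintype.card n - M.rank) A := by
  rw [rescaledTailNorm, if_neg (inv_ne_zero hs), inv_inv, ← smul_add, add_sub_cancel, tailNorm_smul]

theorem IsNullProjectorPair.tendstoInDistribution_sq_mul_tailNorm_sq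
    (h : IsNullProjectorPair M Q₁ Q₂) (ha : Tendsto a atTop atTop) {L : Measure (κ × n → ℝ)}
    [IsProbabilityMeasure L]
    (hconv : TendstoInDistribution μ (fun k ω => a k • vec (Mhat k ω - M)) L) :
    TendstoInDistribution μ
      (fun k ω => a k ^ 2 * tailNorm (Fintype.card n - M.rank) (Mhat k ω) ^ 2)
      (L.map fun z => ‖Q₁ * unvec z * Q₂‖ ^ 2) := by
  have continuous_sq : Continuous fun x : (κ × n → ℝ) × ℝ =>
      rescaledTailNorm M Q₁ Q₂ (unvec x.1, x.2) ^ 2 :=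
    (h.continuous_rescaledTailNorm.comp (by fun_prop)).pow 2
  have tendsto_rescaled :=
    hconv.comp_prodMk_of_tendsto ha.inv_tendsto_atTop continuous_sq
  have limit_eq (z : κ × n → ℝ) :
      rescaledTailNorm M Q₁ Q₂ (unvec z, 0) = ‖Q₁ * unvec z * Q₂‖ := if_pos rfl
  simp only [limit_eq, unvec_smul_vec, Pi.inv_apply] at tendsto_rescaled
  refine fun f => (tendsto_rescaled f).congr' ?_
  filter_upwards [ha.eventually_ne_atTop 0] with k hk
  simp only [rescaledTailNorm_smul_sub_inv _ _ _ _ hk, mul_pow, sq_abs]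

theorem IsNullProjectorPair.tendstoInDistribution_sq_mul_tailNorm_sq_of_gaussianPi
    [DecidableEq n] [DecidableEq κ] (h : IsNullProjectorPair M Q₁ Q₂) (ha : Tendsto a atTop atTop)
    {Γ : Matrix (κ × n) (κ × n) ℝ} (hΓ : Γ.PosSemidef)
    (hconv : TendstoInDistribution μ (fun k ω => a k • vec (Mhat k ω - M)) (gaussianPi Γ))
    {ν : κ × n → ℝ}
    (hν : ((Q₂ ⊗ₖ Q₁) * Γ * (Q₂ ⊗ₖ Q₁)).charpoly = ∏ k, (X - C (ν k))) :
    TendstoInDistribution μ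
      (fun k ω => a k ^ 2 * tailNorm (Fintype.card n - M.rank) (Mhat k ω) ^ 2)
      ((stdGaussianPi (κ × n)).map fun w => ∑ k, ν k * w k ^ 2) := by
  have transpose_right : Q₂ᵀ = Q₂ := transpose_eq_of_isStarProjection h.right_mem.1
  have transpose_kronecker : (Q₂ ⊗ₖ Q₁)ᵀ = Q₂ ⊗ₖ Q₁ := by
    rw [← kroneckerMap_transpose, transpose_right, transpose_eq_of_isStarProjection h.left_mem.1]
  have law_eq : (gaussianPi Γ).map (fun z => ‖Q₁ * unvec z * Q₂‖ ^ 2) =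
      (stdGaussianPi (κ × n)).map fun w => ∑ k, ν k * w k ^ 2 := by
    simp only [frobenius_norm_sq_mul_unvec_mul, transpose_right]
    exact gaussianPi_map_mulVec_dotProduct_mulVec hΓ (by rwa [transpose_kronecker])
  exact law_eq ▸ h.tendstoInDistribution_sq_mul_tailNorm_sq ha hconv

end Asymptotics

theorem stmt_7_general {p H : ℕ} {Ω : Type*} [MeasurableSpace Ω] {μ : Measure Ω}
    [IsProbabilityMeasure μ] {M0 : Matrix (Fin p) (Fin H) ℝ}
    {Γ : Matrix (Fin H × Fin p) (Fin H × Fin p) ℝ} (hΓ : Γ.PosSemidef)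
    {Mhat : ℕ → Ω → Matrix (Fin p) (Fin H) ℝ} {a : ℕ → ℝ} (ha : Tendsto a atTop atTop)
    (hconv : TendstoInDistribution μ (fun n ω => a n • vecM (Mhat n ω - M0)) (gaussianPi Γ))
    {Q1 : Matrix (Fin p) (Fin p) ℝ} {Q2 : Matrix (Fin H) (Fin H) ℝ}
    (hQ : IsNullProjectorPair M0 Q1 Q2) {σhat : ℕ → Ω → Fin p → ℝ}
    (hσ : ∀ n ω, Antitone (σhat n ω)) (hσ0 : ∀ n ω i, 0 ≤ σhat n ω i)
    (hσsv : ∀ n ω, (Mhat n ω * (Mhat n ω)ᵀ).charpoly = ∏ k, (X - C (σhat n ω k ^ 2)))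
    {nu : Fin H × Fin p → ℝ}
    (hnu : ((Q2 ⊗ₖ Q1) * Γ * (Q2 ⊗ₖ Q1)).charpoly = ∏ k, (X - C (nu k))) :
    TendstoInDistribution μ
      (fun n ω => a n ^ 2 * ∑ k : Fin p, if M0.rank ≤ (k : ℕ) then σhat n ω k ^ 2 else 0)
      ((stdGaussianPi (Fin H × Fin p)).map fun w => ∑ k, nu k * w k ^ 2) := by
  have tendsto_tail :=
    hQ.tendstoInDistribution_sq_mul_tailNorm_sq_of_gaussianPi ha hΓ hconv hnu
  simpa only [Fintype.card_fin,
    tailNorm_sq_eq_sum_singularValues _ (hσ _ _) (hσ0 _ _) (hσsv _ _)] using tendsto_tail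

/-- Proposition 5: under `H₀ : rank(M₀) = m` and
`n^{1/2} vec(M̂ − M₀) →ᵈ N(0, Γ)`, the statistic `Λ̂₁ = n Σ_{k=m+1}^p λ̂_k²` converges in
distribution to `Σ_k ν_k W_k²`, where the `ν_k` are the eigenvalues of
`(Q₂ ⊗ Q₁) Γ (Q₂ ⊗ Q₁)` and the `W_k` are i.i.d. standard Gaussians. Here `Q₁, Q₂` are the
orthogonal projectors onto the left/right singular subspaces of `M₀` associated with its
`p − m` zero singular values, and the `λ̂_k` are the (descending) singular values of `M̂`. -/
theorem stmt_7 {p H m : ℕ} (hpH : p ≤ H) (hmp : m ≤ p)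
    {Ω : Type*} [MeasurableSpace Ω] (μ : Measure Ω) [IsProbabilityMeasure μ]
    (M0 : Matrix (Fin p) (Fin H) ℝ) (hM0 : M0.rank = m)
    (Γ : Matrix (Fin H × Fin p) (Fin H × Fin p) ℝ) (hΓ : Γ.PosSemidef)
    (Mhat : ℕ → Ω → Matrix (Fin p) (Fin H) ℝ)
    (hconv : TendstoInDistribution μ
      (fun n ω => Real.sqrt n • vecM (Mhat n ω - M0)) (gaussianPi Γ))
    (Q1 : Matrix (Fin p) (Fin p) ℝ) (Q2 : Matrix (Fin H) (Fin H) ℝ)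
    (hQ1proj : Q1 * Q1 = Q1) (hQ1symm : Q1ᵀ = Q1) (hQ1M0 : Q1 * M0 = 0)
    (hQ1rank : Q1.rank = p - m)
    (hQ2proj : Q2 * Q2 = Q2) (hQ2symm : Q2ᵀ = Q2) (hQ2M0 : M0 * Q2 = 0)
    (hQ2rank : Q2.rank = H - m)
    (σhat : ℕ → Ω → Fin p → ℝ)
    (hσdesc : ∀ n ω, ∀ i j : Fin p, i ≤ j → σhat n ω j ≤ σhat n ω i)
    (hσnonneg : ∀ n ω i, 0 ≤ σhat n ω i)
    (hσsv : ∀ n ω, (Mhat n ω * (Mhat n ω)ᵀ).charpoly =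
      ∏ k : Fin p, (Polynomial.X - Polynomial.C (σhat n ω k ^ 2)))
    (nu : Fin H × Fin p → ℝ)
    (hnu : ((Q2 ⊗ₖ Q1) * Γ * (Q2 ⊗ₖ Q1)).charpoly =
      ∏ k : Fin H × Fin p, (Polynomial.X - Polynomial.C (nu k))) :
    TendstoInDistribution μ
      (fun n ω => (n : ℝ) * ∑ k : Fin p, (if m ≤ (k : ℕ) then σhat n ω k ^ 2 else 0))
      ((stdGaussianPi (Fin H × Fin p)).map (fun w => ∑ k, nu k * w k ^ 2)) := by
  have null_projectors : IsNullProjectorPair M0 Q1 Q2 :=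
    .of_transpose_eq hQ1proj hQ1symm hQ1M0 (by rw [hQ1rank, hM0, Fintype.card_fin])
      hQ2proj hQ2symm hQ2M0 (by rw [hQ2rank, hM0, Fintype.card_fin])
  simpa only [Function.comp_apply, Real.sq_sqrt (Nat.cast_nonneg _), hM0] using
    stmt_7_general hΓ (Real.tendsto_sqrt_atTop.comp tendsto_natCast_atTop_atTop) hconv
      null_projectors hσdesc hσnonneg hσsv hnu

end
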